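/- Let d ≥ 4 be an integer and ε > 0 a real. Let D be a digraph with m arcs and minimum outdegree at least d, and let X, Y be a partition of V(D) with e(X) = 0 such that every y ∈ Y satisfies d(y) ≤ ε²m/4. Set θ := min{|θ(X₁,X₂)| : X₁,X₂ a partition of X} and X' := {x ∈ X : s(x) ≥ θ}. If |X'| ≥ d, then V(D) admits a bipartition V₁, V₂ with min{e(V₁,V₂), e(V₂,V₁)} ≥ ((d−1)/(2(2d−1)) − ε)·m. -/

import Mathlib

open Finset

/-- Number of arcs of the digraph `A` directed from a vertex of `S` to a vertex of `T`. -/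
def dArcs {V : Type} [Fintype V] [DecidableEq V] (A : V → V → Prop) [DecidableRel A]
    (S T : Finset V) : ℕ :=
  ((S ×ˢ T).filter fun p => A p.1 p.2).card

/-- Outdegree of `x`. -/
def outDeg {V : Type} [Fintype V] (A : V → V → Prop) [DecidableRel A] (x : V) : ℕ :=
  (Finset.univ.filter fun y => A x y).card

/-- Indegree of `x`. -/
def inDeg {V : Type} [Fintype V] (A : V → V → Prop) [DecidableRel A] (x : V) : ℕ :=
  (Finset.univ.filter fun y => A y x).card

/-- Degree of `x`: outdegree plus indegree. -/
def deg {V : Type} [Fintype V] (A : V → V → Prop) [DecidableRel A] (x : V) : ℕ :=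
  outDeg A x + inDeg A x

/-- `s(x) = max{d⁺(x) − d⁻(x), d⁻(x) − d⁺(x)}`. -/
def sVal {V : Type} [Fintype V] (A : V → V → Prop) [DecidableRel A] (x : V) : ℤ :=
  max ((outDeg A x : ℤ) - (inDeg A x : ℤ)) ((inDeg A x : ℤ) - (outDeg A x : ℤ))

/-- The gap `θ(X₁,X₂) = (e(X₁,Y)+e(Y,X₂)) − (e(X₂,Y)+e(Y,X₁))`. -/
def gap {V : Type} [Fintype V] [DecidableEq V] (A : V → V → Prop) [DecidableRel A]
    (X₁ X₂ Y : Finset V) : ℤ :=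
  ((dArcs A X₁ Y : ℤ) + (dArcs A Y X₂ : ℤ)) - ((dArcs A X₂ Y : ℤ) + (dArcs A Y X₁ : ℤ))

/-
Call `|d⁺(x) - d⁻(x)|` the imbalance of `x`, so that gaps are signed sums of `d⁺ - d⁻` over `X`. If
`θ ≤ m / (2d - 1)`, place `X₁` and `X₂` of an optimal partition on the two sides and split `Y`
uniformly at random. Otherwise the imbalances of the vertices outside `X'`, being less than `θ`,
would cancel greedily against any small signed sum over `X'`, so every signed sum of the imbalances
over `X'` is at least `θ` plus the total imbalance outside `X'` in absolute value. All imbalances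
are at most `|Y| < 2θ`, hence exchanging one vertex of `X'` for another cannot change the sign of
such a sum: `|X'|` is odd and the sign is that of the majority. Reversing all arcs if necessary, a
majority of the vertices of `X'` have `d⁺ ≤ d⁻`. Placing all but a minority `L` of these on the
second side and all other vertices of `X` on the first one leaves a small nonnegative gap, which is
balanced by putting each `y ∈ Y` on the first side with a probability slightly below `1 / 2`. The
loss is at most `m / (2d - 1)`.

Since the degrees in `Y` are at most `ε² m / 4`, the second moment method turns the random partition
into an actual one at a cost of `ε m` in each direction; here the vertices of `Y` are rounded one by
one, keeping the sum of the two squared deviations below its expectation.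
-/

section SignedSum

theorem sum_abs_eq_sub_two_mul {ι R : Type*} [CommRing R] [LinearOrder R]
    [IsStrictOrderedRing R] (σ : ι → R) (S : Finset ι) :
    ∑ x ∈ S, |σ x| = ∑ x ∈ S, σ x - 2 * ∑ x ∈ S with σ x ≤ 0, σ x := by
  rw [sum_filter, mul_sum, ← sum_sub_distrib]
  refine sum_congr rfl fun x _ => ?_
  split_ifs with h
  · rw [abs_of_nonpos h]; ring
  · rw [abs_of_pos (not_le.1 h), mul_zero, sub_zero]

variable {ι R : Type*} [DecidableEq ι] [CommRing R]

/-- The signed sum of `σ` over `S` in which the elements of `U ⊆ S` carry the sign `+` and those of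
`S \ U` the sign `-`. For `σ = d⁺ - d⁻` this is the gap `θ(U, S \ U)`. -/
def signedSum (σ : ι → R) (S U : Finset ι) : R :=
  ∑ x ∈ U, σ x - ∑ x ∈ S \ U, σ x

variable {σ : ι → R} {S T U W : Finset ι} {θ t v : R}

theorem signedSum_eq_sum_ite (hU : U ⊆ S) :
    signedSum σ S U = ∑ x ∈ S, if x ∈ U then σ x else -σ x := by
  rw [sum_ite, sum_neg_distrib, filter_not, filter_mem_eq_inter, inter_eq_right.2 hU, signedSum,
    sub_eq_add_neg]

theorem signedSum_eq_two_mul_sub (hU : U ⊆ S) :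
    signedSum σ S U = 2 * ∑ x ∈ U, σ x - ∑ x ∈ S, σ x := by
  rw [signedSum, ← sum_sdiff hU]; ring

theorem signedSum_sdiff (hU : U ⊆ S) : signedSum σ S (S \ U) = -signedSum σ S U := by
  rw [signedSum, signedSum, Finset.sdiff_sdiff_eq_self hU, neg_sub]

theorem signedSum_union (hT : T ⊆ S) (hU : U ⊆ T) (hW : W ⊆ S \ T) :
    signedSum σ S (U ∪ W) = signedSum σ T U + signedSum σ (S \ T) W := by
  have hdisj : Disjoint U W :=
    disjoint_of_subset_left hU (disjoint_of_subset_right hW disjoint_sdiff)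
  rw [signedSum_eq_two_mul_sub hU, signedSum_eq_two_mul_sub hW,
    signedSum_eq_two_mul_sub (union_subset (hU.trans hT) (hW.trans sdiff_subset)),
    sum_union hdisj, ← sum_sdiff hT]
  ring

theorem signedSum_insert_erase {u v : ι} (hU : U ⊆ S) (hu : u ∈ U) (hv : v ∈ S \ U) :
    signedSum σ S (insert v (U.erase u)) = signedSum σ S U - 2 * σ u + 2 * σ v := by
  rw [mem_sdiff] at hv
  rw [signedSum_eq_two_mul_sub (insert_subset hv.1 ((erase_subset u U).trans hU)),
    signedSum_eq_two_mul_sub hU, sum_insert fun h => hv.2 (mem_of_mem_erase h),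
    ← add_sum_erase U σ hu]
  ring

variable [LinearOrder R] [IsStrictOrderedRing R]

theorem exists_signedSum_eq_signedSum_abs (σ : ι → R) (hU : U ⊆ S) :
    ∃ W ⊆ S, signedSum σ S W = signedSum (fun x => |σ x|) S U := by
  refine ⟨S.filter fun x => x ∈ U ↔ 0 ≤ σ x, filter_subset _ _, ?_⟩
  rw [signedSum_eq_sum_ite (filter_subset _ _), signedSum_eq_sum_ite hU]
  refine sum_congr rfl fun x hx => ?_
  rcases le_or_gt 0 (σ x) with h | h
  · simp [hx, h, abs_of_nonneg h]
  · by_cases hxU : x ∈ U <;> simp [hx, hxU, h.not_ge, abs_of_neg h]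

theorem le_abs_signedSum_abs (h : ∀ U ⊆ S, θ ≤ |signedSum σ S U|) :
    ∀ U ⊆ S, θ ≤ |signedSum (fun x => |σ x|) S U| := fun _ hU =>
  let ⟨W, hW, hWU⟩ := exists_signedSum_eq_signedSum_abs σ hU
  hWU ▸ h W hW

theorem signedSum_sdiff_filter_nonpos {L : Finset ι} (hT : T ⊆ S)
    (hL : L ⊆ T.filter fun x => σ x ≤ 0) :
    signedSum σ S (S \ (T.filter (fun x => σ x ≤ 0) \ L)) =
      ∑ x ∈ S \ T, σ x + signedSum (fun x => |σ x|) T (T \ L) := by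
  have hLT : L ⊆ T := hL.trans (filter_subset _ _)
  have habs : ∑ x ∈ L, |σ x| = -∑ x ∈ L, σ x := by
    rw [← sum_neg_distrib]
    exact sum_congr rfl fun x hx => abs_of_nonpos (mem_filter.1 (hL hx)).2
  rw [signedSum_sdiff ((sdiff_subset.trans (filter_subset _ _)).trans hT), signedSum_sdiff hLT,
    signedSum_eq_two_mul_sub ((sdiff_subset.trans (filter_subset _ _)).trans hT),
    signedSum_eq_two_mul_sub hLT, sum_abs_eq_sub_two_mul σ T, habs, ← sum_sdiff hT, ← sum_sdiff hL]
  ring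

/-- Greedy choice of signs: every summand is added with the sign opposite to the current total. -/
theorem exists_abs_add_signedSum_lt (h0 : ∀ x ∈ S, 0 ≤ σ x) (hlt : ∀ x ∈ S, σ x < θ)
    (hv : |v| < θ + ∑ x ∈ S, σ x) : ∃ U ⊆ S, |v + signedSum σ S U| < θ := by
  induction S using Finset.induction_on generalizing v with
  | empty => exact ⟨∅, Subset.rfl, by simpa [signedSum] using hv⟩
  | insert s S hs ih =>
    rw [forall_mem_insert] at h0 hlt
    rw [sum_insert hs, abs_lt] at hv
    have hsum : 0 ≤ ∑ x ∈ S, σ x := sum_nonneg h0.2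
    rcases le_total 0 v with h | h
    · obtain ⟨U, hU, hUv⟩ := ih h0.2 hlt.2 (v := v - σ s) (by rw [abs_lt]; constructor <;> linarith)
      refine ⟨U, hU.trans (subset_insert s S), hUv.trans_eq' ?_⟩
      rw [signedSum_eq_two_mul_sub hU, signedSum_eq_two_mul_sub (hU.trans (subset_insert s S)),
        sum_insert hs]
      ring_nf
    · obtain ⟨U, hU, hUv⟩ := ih h0.2 hlt.2 (v := v + σ s) (by rw [abs_lt]; constructor <;> linarith)
      refine ⟨insert s U, insert_subset_insert s hU, hUv.trans_eq' ?_⟩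
      rw [signedSum_eq_two_mul_sub hU, signedSum_eq_two_mul_sub (insert_subset_insert s hU),
        sum_insert hs, sum_insert fun h => hs (hU h)]
      ring_nf

theorem add_sum_le_abs_signedSum (hT : T ⊆ S) (h0 : ∀ x ∈ S \ T, 0 ≤ σ x)
    (hlt : ∀ x ∈ S \ T, σ x < θ) (hS : ∀ U ⊆ S, θ ≤ |signedSum σ S U|) (hU : U ⊆ T) :
    θ + ∑ x ∈ S \ T, σ x ≤ |signedSum σ T U| := by
  by_contra! hsmall
  obtain ⟨W, hW, hWlt⟩ := exists_abs_add_signedSum_lt h0 hlt hsmall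
  rw [← signedSum_union hT hU hW] at hWlt
  exact (hS _ (union_subset (hU.trans hT) (hW.trans sdiff_subset))).not_gt hWlt

theorem signedSum_insert_erase_pos {u v : ι} (hge : ∀ x ∈ S, θ ≤ σ x) (hlt : ∀ x ∈ S, σ x < 2 * θ)
    (hsum : ∀ U ⊆ S, θ ≤ |signedSum σ S U|) (hU : U ⊆ S) (hu : u ∈ U) (hv : v ∈ S \ U)
    (hpos : 0 < signedSum σ S U) : 0 < signedSum σ S (insert v (U.erase u)) := by
  have hUθ := hsum U hU
  have hswap := hsum (insert v (U.erase u))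
    (insert_subset (mem_sdiff.1 hv).1 ((erase_subset u U).trans hU))
  rw [abs_of_pos hpos] at hUθ
  rw [signedSum_insert_erase hU hu hv] at hswap ⊢
  have hvθ := hge v (mem_sdiff.1 hv).1
  have huθ := hlt u (hU hu)
  rcases le_abs.1 hswap with h | h <;> linarith

theorem signedSum_pos_of_card_eq (hge : ∀ x ∈ S, θ ≤ σ x) (hlt : ∀ x ∈ S, σ x < 2 * θ)
    (hsum : ∀ U ⊆ S, θ ≤ |signedSum σ S U|) (hW : W ⊆ S) (hU : U ⊆ S) (hcard : #U = #W)
    (hpos : 0 < signedSum σ S U) : 0 < signedSum σ S W := by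
  induction hn : #(U \ W) generalizing U with
  | zero =>
    have hUW : U = W := eq_of_subset_of_card_le
      (sdiff_eq_empty_iff_subset.1 (card_eq_zero.1 hn)) hcard.ge
    rwa [← hUW]
  | succ n ih =>
    obtain ⟨u, hu⟩ : (U \ W).Nonempty := card_pos.1 (by omega)
    obtain ⟨v, hv⟩ : (W \ U).Nonempty := card_pos.1 (by rw [← card_sdiff_comm hcard]; omega)
    have hvSU : v ∈ S \ U := sdiff_subset_sdiff hW Subset.rfl hv
    have hvW := (mem_sdiff.1 hv).1
    have hvU := (mem_sdiff.1 hv).2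
    have huU := (mem_sdiff.1 hu).1
    refine ih (insert_subset (hW hvW) ((erase_subset u U).trans hU)) ?_
      (signedSum_insert_erase_pos hge hlt hsum hU huU hvSU hpos) ?_
    · rw [card_insert_of_notMem fun h => hvU (mem_of_mem_erase h), card_erase_add_one huU, hcard]
    · rw [insert_sdiff_of_mem _ hvW, erase_sdiff_comm, card_erase_of_mem hu, hn, Nat.add_sub_cancel]

theorem signedSum_le_signedSum (h0 : ∀ x ∈ S, 0 ≤ σ x) (hUW : U ⊆ W) (hW : W ⊆ S) :
    signedSum σ S U ≤ signedSum σ S W := by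
  have hle : ∑ x ∈ U, σ x ≤ ∑ x ∈ W, σ x :=
    sum_le_sum_of_subset_of_nonneg hUW fun x hx _ => h0 x (hW hx)
  rw [signedSum_eq_two_mul_sub (hUW.trans hW), signedSum_eq_two_mul_sub hW]
  linarith

theorem signedSum_pos_of_card_le_two_mul (hθ : 0 < θ) (hge : ∀ x ∈ S, θ ≤ σ x)
    (hlt : ∀ x ∈ S, σ x < 2 * θ) (hsum : ∀ U ⊆ S, θ ≤ |signedSum σ S U|) (hU : U ⊆ S)
    (hcard : #S ≤ 2 * #U) : 0 < signedSum σ S U := by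
  have hne : signedSum σ S U ≠ 0 := abs_pos.1 (hθ.trans_le (hsum U hU))
  by_contra hneg
  obtain ⟨W, hUW, hW, hWcard⟩ := exists_subsuperset_card_eq (sdiff_subset : S \ U ⊆ S)
    (n := #U) (by rw [card_sdiff_of_subset hU]; omega) (card_le_card hU)
  have hWpos : 0 < signedSum σ S W := calc
    0 < -signedSum σ S U := neg_pos.2 ((not_lt.1 hneg).lt_of_ne hne)
    _ = signedSum σ S (S \ U) := (signedSum_sdiff hU).symm
    _ ≤ signedSum σ S W := signedSum_le_signedSum (fun x hx => hθ.le.trans (hge x hx)) hUW hW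
  exact hneg (signedSum_pos_of_card_eq hge hlt hsum hU hW hWcard hWpos)

theorem odd_card_of_le_abs_signedSum (hθ : 0 < θ) (hge : ∀ x ∈ S, θ ≤ σ x)
    (hlt : ∀ x ∈ S, σ x < 2 * θ) (hsum : ∀ U ⊆ S, θ ≤ |signedSum σ S U|) : Odd #S := by
  by_contra hodd
  obtain ⟨j, hj⟩ := Nat.not_odd_iff_even.1 hodd
  obtain ⟨U, hU, hUcard⟩ := exists_subset_card_eq (s := S) (n := j) (by omega)
  have hUpos := signedSum_pos_of_card_le_two_mul hθ hge hlt hsum hU (by omega)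
  have hcompl := signedSum_pos_of_card_le_two_mul hθ hge hlt hsum (sdiff_subset : S \ U ⊆ S)
    (by rw [card_sdiff_of_subset hU]; omega)
  rw [signedSum_sdiff hU] at hcompl
  linarith

theorem exists_card_eq_two_mul_add_one (hθ : 0 < θ) (hT : T ⊆ S) (h0 : ∀ x ∈ S \ T, 0 ≤ σ x)
    (hsmall : ∀ x ∈ S \ T, σ x < θ) (hge : ∀ x ∈ T, θ ≤ σ x) (hlt : ∀ x ∈ T, σ x < 2 * θ)
    (hS : ∀ U ⊆ S, θ ≤ |signedSum σ S U|) :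
    ∃ j, #T = 2 * j + 1 ∧ ∀ U ⊆ T, #U = j + 1 → θ + ∑ x ∈ S \ T, σ x ≤ signedSum σ T U := by
  have hT' : ∀ U ⊆ T, θ + ∑ x ∈ S \ T, σ x ≤ |signedSum σ T U| := fun U hU =>
    add_sum_le_abs_signedSum hT h0 hsmall hS hU
  have hTθ : ∀ U ⊆ T, θ ≤ |signedSum σ T U| := fun U hU =>
    (le_add_of_nonneg_right (sum_nonneg h0)).trans (hT' U hU)
  obtain ⟨j, hj⟩ := odd_card_of_le_abs_signedSum hθ hge hlt hTθ
  refine ⟨j, hj, fun U hU hUcard => ?_⟩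
  rw [← abs_of_pos (signedSum_pos_of_card_le_two_mul hθ hge hlt hTθ hU (by omega))]
  exact hT' U hU

theorem exists_subset_signedSum_sdiff_mem_Icc {N : Finset ι} {x₀ : ι} {j : ℕ}
    (hcard : #S = 2 * j + 1) (hmaj : ∀ U ⊆ S, #U = j + 1 → t ≤ signedSum σ S U) (hx₀ : x₀ ∈ S)
    (hN : N ⊆ S) (hNcard : j + 1 ≤ #N) :
    ∃ L ⊆ N, #L = j ∧ signedSum σ S (S \ L) ∈ Set.Icc t (2 * σ x₀ - t) := by
  obtain ⟨L, hL, hLcard⟩ := exists_subset_card_eq (s := N.erase x₀) (n := j)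
    (by have := pred_card_le_card_erase (s := N) (a := x₀); omega)
  have hLN : L ⊆ N := hL.trans (erase_subset _ _)
  have hLS : L ⊆ S := hLN.trans hN
  have hx₀L : x₀ ∉ L := fun h => notMem_erase x₀ N (hL h)
  have hinsert := hmaj (insert x₀ L) (insert_subset hx₀ hLS)
    (by rw [card_insert_of_notMem hx₀L, hLcard])
  refine ⟨L, hLN, hLcard, hmaj _ sdiff_subset (by rw [card_sdiff_of_subset hLS]; omega), ?_⟩
  rw [signedSum_eq_two_mul_sub (insert_subset hx₀ hLS), sum_insert hx₀L] at hinsert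
  rw [signedSum_sdiff hLS, signedSum_eq_two_mul_sub hLS]
  linarith

end SignedSum

/-
Notation of this section: `T` is the total imbalance of the vertices of `X'` and `τ` the smallest
one, `g` is the gap of the chosen partition `X = X₁ ∪ X₂` and `g'` the signed sum of the imbalances
over `X'` behind it, `γ` is the sum of the outdegrees over `X₂`, `M = e(Y)` and `n = |Y|`. Placing
each `y ∈ Y` on the first side with probability `1 / 2 - q` equalizes the two directions when
`g = 2 * q * T`, and `θ₀` is the loss `m / (2 * d - 1)` that can be afforded.
-/
section Bias

variable {d n τ θ₀ T γ M g g' : ℝ}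

theorem bias_loss_le_of_add_one_mul_le (hd : 1 ≤ d) (hθ₀ : 0 ≤ θ₀) (hθτ : θ₀ ≤ τ) (hM : 0 ≤ M)
    (hm : T + 2 * γ + M ≤ (2 * d - 1) * θ₀) (hT : (d + 1) * τ ≤ T) :
    (2 * τ - θ₀) * (2 * τ - θ₀ + 2 * γ + M / 2) ≤ T * θ₀ := by
  have hτ : 0 ≤ τ := hθ₀.trans hθτ
  have hTτ : (d + 1) * τ * τ ≤ T * τ := by gcongr
  have hsq : 0 ≤ (d - 1) * (τ - θ₀) ^ 2 + τ * θ₀ := by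
    have := sub_nonneg.2 hd
    positivity
  calc (2 * τ - θ₀) * (2 * τ - θ₀ + 2 * γ + M / 2)
      ≤ (2 * τ - θ₀) * (2 * τ - θ₀ + ((2 * d - 1) * θ₀ - T)) := by
        gcongr ?_ * ?_ <;> linarith
    _ ≤ T * θ₀ := by linarith

/-- The constant `5 / 13` is the value of `(d + 1) / (3 * d + 1)` at `d = 4`. -/
theorem le_five_thirteenths_of_le_mul (hd : 4 ≤ d) (hτn : τ ≤ n) {m : ℝ} (hn : d * n + γ ≤ m)
    (hγ : γ ≤ (d + 1) / 2 * (n - τ)) : γ ≤ 5 / 13 * (m - d * τ) := by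
  have := mul_nonneg (sub_nonneg.2 hd) (sub_nonneg.2 hτn)
  linarith

theorem bias_loss_le_of_mul_le (hd : 4 ≤ d) (hθ₀ : 0 ≤ θ₀) (hθτ : θ₀ ≤ τ)
    (hm : T + 2 * γ + M ≤ (2 * d - 1) * θ₀) (hT : d * τ ≤ T)
    (hγ : γ ≤ 5 / 13 * ((2 * d - 1) * θ₀ - d * τ)) :
    (2 * τ - θ₀) * (2 * τ - θ₀ + 2 * γ + M / 2) ≤ T * θ₀ := by
  have hTτ : 0 ≤ (T - d * τ) * (τ + θ₀ / 2) := mul_nonneg (by linarith) (by linarith)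
  -- For `T = d * τ` the difference of the two sides is affine in `d`; `hbase` is 26 times its value
  -- at `d = 4` and `hslope` is 26 times its slope.
  have hbase : 0 ≤ 80 * (τ - 103 / 80 * θ₀) ^ 2 + 191 / 80 * θ₀ ^ 2 := by positivity
  have hslope : 0 ≤ 46 * (τ - 89 / 92 * θ₀) ^ 2 + 543 / 184 * θ₀ ^ 2 := by positivity
  have := mul_nonneg (sub_nonneg.2 hd) hslope
  calc (2 * τ - θ₀) * (2 * τ - θ₀ + 2 * γ + M / 2)
      ≤ (2 * τ - θ₀) * (2 * τ - θ₀ + (5 / 13 * ((2 * d - 1) * θ₀ - d * τ)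
          + ((2 * d - 1) * θ₀ - T) / 2)) := by
        gcongr ?_ * ?_ <;> linarith
    _ ≤ T * θ₀ := by linarith

theorem exists_bias (hd : 4 ≤ d) (hθ₀ : 0 ≤ θ₀) (hθτ : θ₀ < τ) (hM : 0 ≤ M) (hγ0 : 0 ≤ γ)
    (hm : T + 2 * γ + M ≤ (2 * d - 1) * θ₀) (hg : g ∈ Set.Icc 0 (2 * τ - θ₀))
    (hg' : g' ≤ 2 * τ - θ₀) (hτn : τ ≤ n) (hn : d * n + γ ≤ (2 * d - 1) * θ₀)
    (hT : (d + 1) * τ ≤ T ∨ d * τ ≤ T ∧ γ ≤ (d + 1) / 2 * (n - τ)) :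
    ∃ q ∈ Set.Icc (0 : ℝ) (1 / 4), g = 2 * q * T ∧ 2 * q * (g' + 2 * γ + 2 * q * M) ≤ θ₀ := by
  have hdT : d * τ ≤ T := hT.elim (fun h => by linarith) And.left
  have hτ4 : 4 * τ ≤ d * τ := by gcongr; exact hθ₀.trans hθτ.le
  have hT0 : 0 < T := by linarith
  have hloss : (2 * τ - θ₀) * (2 * τ - θ₀ + 2 * γ + M / 2) ≤ T * θ₀ := by
    rcases hT with hT | ⟨hT, hγ⟩
    · exact bias_loss_le_of_add_one_mul_le (by linarith) hθ₀ hθτ.le hM hm hT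
    · exact bias_loss_le_of_mul_le hd hθ₀ hθτ.le hm hT (le_five_thirteenths_of_le_mul hd hτn hn hγ)
  have hq4 : g / (2 * T) ≤ 1 / 4 := by
    rw [div_le_div_iff₀ (by positivity) (by norm_num)]; linarith [hg.2]
  have hq0 : 0 ≤ g / (2 * T) := div_nonneg hg.1 (by positivity)
  refine ⟨g / (2 * T), ⟨hq0, hq4⟩, by field_simp, ?_⟩
  calc 2 * (g / (2 * T)) * (g' + 2 * γ + 2 * (g / (2 * T)) * M)
      ≤ 2 * (g / (2 * T)) * (2 * τ - θ₀ + 2 * γ + 2 * (1 / 4) * M) := by gcongr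
    _ = g * (2 * τ - θ₀ + 2 * γ + M / 2) / T := by field_simp; ring
    _ ≤ (2 * τ - θ₀) * (2 * τ - θ₀ + 2 * γ + M / 2) / T := by gcongr; exacts [by linarith, hg.2]
    _ ≤ θ₀ := by rw [div_le_iff₀ hT0]; linarith

end Bias

section BiasedCut

variable {V : Type*}

/-- The expected number of arcs from the first to the second side of the partition that places `X₁`
on the first side, `X₂` on the second one and each vertex of the rest `Y`, independently, on the
first side with probability `p`. Here `a` and `b` are the outdegrees and indegrees, `M` is the
number of arcs inside `Y`, and `X₁ ∪ X₂` spans no arc. Exchanging `a` and `b` counts the arcs from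
the second side to the first one. -/
def biasedCut (a b : V → ℝ) (M : ℝ) (X₁ X₂ : Finset V) (p : ℝ) : ℝ :=
  (1 - p) * ∑ x ∈ X₁, a x + p * ∑ x ∈ X₂, b x + p * (1 - p) * M

variable {a b : V → ℝ} {M : ℝ} {X₁ X₂ : Finset V}

theorem biasedCut_swap (p : ℝ) : biasedCut b a M X₁ X₂ p = biasedCut a b M X₂ X₁ (1 - p) := by
  rw [biasedCut, biasedCut]; ring

theorem le_biasedCut_half_sub {q T g' m θ₀ : ℝ} (hq : 0 ≤ q)
    (hm : ∑ x ∈ X₁, (a x + b x) + ∑ x ∈ X₂, (a x + b x) + M = m)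
    (hg : ∑ x ∈ X₁, (a x - b x) - ∑ x ∈ X₂, (a x - b x) = 2 * q * T)
    (hloss : 2 * q * (g' + 2 * ∑ x ∈ X₂, a x + 2 * q * M) ≤ θ₀)
    (ha : 0 ≤ ∑ x ∈ X₁, a x) (hb₁ : (T - g') / 2 ≤ ∑ x ∈ X₁, b x)
    (hb₂ : ∑ x ∈ X₂, b x ≤ (T + g') / 2 + ∑ x ∈ X₂, a x) :
    (m - θ₀) / 4 ≤ biasedCut a b M X₁ X₂ (1 / 2 - q) ∧
      (m - θ₀) / 4 ≤ biasedCut b a M X₁ X₂ (1 / 2 - q) := by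
  simp only [sum_add_distrib, sum_sub_distrib] at hm hg
  have hqa := mul_nonneg hq ha
  have hqb₁ := mul_le_mul_of_nonneg_left hb₁ hq
  have hqb₂ := mul_le_mul_of_nonneg_left hb₂ hq
  constructor <;> rw [biasedCut] <;> linarith

theorem le_biasedCut_half {m θ : ℝ} (hm : ∑ x ∈ X₁, (a x + b x) + ∑ x ∈ X₂, (a x + b x) + M = m)
    (hθ : |∑ x ∈ X₁, (a x - b x) - ∑ x ∈ X₂, (a x - b x)| ≤ θ) :
    (m - θ) / 4 ≤ biasedCut a b M X₁ X₂ (1 / 2) ∧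
      (m - θ) / 4 ≤ biasedCut b a M X₁ X₂ (1 / 2) := by
  simp only [sum_add_distrib, sum_sub_distrib, abs_le] at hm hθ
  constructor <;> rw [biasedCut] <;> linarith

end BiasedCut

section DegreeProfile

variable {V : Type*}

/-- Conditions on the outdegrees `a` and indegrees `b` of the vertices of an arcless set `X` in a
digraph with `m` arcs whose remaining vertices form a set `Y` of `n` elements that spans `M` arcs,
each `y ∈ Y` having outdegree at least `d`. They capture all that the choice of a fractional
partition needs, and are symmetric in `a` and `b`. -/
structure IsDegreeProfile (X : Finset V) (a b : V → ℝ) (d n M m : ℝ) : Prop where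
  left_mem : ∀ x ∈ X, a x ∈ Set.Icc 0 n
  right_mem : ∀ x ∈ X, b x ∈ Set.Icc 0 n
  inner_nonneg : 0 ≤ M
  sum_add_inner : ∑ x ∈ X, (a x + b x) + M = m
  mul_add_sum_min_le : d * n + ∑ x ∈ X, min (a x) (b x) ≤ m

namespace IsDegreeProfile

variable {X X₂ H L : Finset V} {a b : V → ℝ} {d n M m θ : ℝ}

theorem symm (h : IsDegreeProfile X a b d n M m) : IsDegreeProfile X b a d n M m where
  left_mem := h.right_mem
  right_mem := h.left_mem
  inner_nonneg := h.inner_nonneg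
  sum_add_inner := by simpa only [add_comm] using h.sum_add_inner
  mul_add_sum_min_le := by simpa only [min_comm] using h.mul_add_sum_min_le

theorem abs_sub_le (h : IsDegreeProfile X a b d n M m) {x : V} (hx : x ∈ X) :
    |a x - b x| ≤ n :=
  abs_sub_le_of_nonneg_of_le (h.left_mem x hx).1 (h.left_mem x hx).2 (h.right_mem x hx).1
    (h.right_mem x hx).2

theorem sum_left_nonneg (h : IsDegreeProfile X a b d n M m) (hX₂ : X₂ ⊆ X) : 0 ≤ ∑ x ∈ X₂, a x :=
  sum_nonneg fun x hx => (h.left_mem x (hX₂ hx)).1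

theorem sum_abs_add_two_mul_sum_min (h : IsDegreeProfile X a b d n M m) :
    ∑ x ∈ X, |a x - b x| + 2 * ∑ x ∈ X, min (a x) (b x) + M = m := by
  rw [← h.sum_add_inner, mul_sum, ← sum_add_distrib]
  congr 1
  refine sum_congr rfl fun x _ => ?_
  rw [← max_sub_min_eq_abs', ← min_add_max (a x)]
  ring

theorem sum_le_sum_min (h : IsDegreeProfile X a b d n M m) (hX₂ : X₂ ⊆ X)
    (hab : ∀ x ∈ X₂, a x ≤ b x) : ∑ x ∈ X₂, a x ≤ ∑ x ∈ X, min (a x) (b x) := calc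
  ∑ x ∈ X₂, a x = ∑ x ∈ X₂, min (a x) (b x) :=
    sum_congr rfl fun x hx => (min_eq_left (hab x hx)).symm
  _ ≤ ∑ x ∈ X, min (a x) (b x) := sum_le_sum_of_subset_of_nonneg hX₂ fun x hx _ =>
    le_min (h.left_mem x hx).1 (h.right_mem x hx).1

theorem sum_le_card_mul_sub (h : IsDegreeProfile X a b d n M m) (hX₂ : X₂ ⊆ X) {τ : ℝ}
    (hab : ∀ x ∈ X₂, a x ≤ b x) (hτ : ∀ x ∈ X₂, τ ≤ |a x - b x|) :
    ∑ x ∈ X₂, a x ≤ #X₂ * (n - τ) := by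
  rw [← nsmul_eq_mul]
  refine sum_le_card_nsmul _ _ _ fun x hx => ?_
  have hτx := hτ x hx
  rw [abs_of_nonpos (sub_nonpos.2 (hab x hx))] at hτx
  linarith [(h.right_mem x (hX₂ hx)).2]

theorem total_nonneg (h : IsDegreeProfile X a b d n M m) : 0 ≤ m := by
  rw [← h.sum_add_inner]
  exact add_nonneg (sum_nonneg fun x hx => add_nonneg (h.left_mem x hx).1 (h.right_mem x hx).1)
    h.inner_nonneg

theorem lt_two_mul {θ₀ : ℝ} (h : IsDegreeProfile X a b d n M m) (hd : 0 < d) (hθ₀ : 0 ≤ θ₀)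
    (hm : m = (2 * d - 1) * θ₀) (hθ : θ₀ < θ) : n < 2 * θ := by
  have hmin : 0 ≤ ∑ x ∈ X, min (a x) (b x) :=
    sum_nonneg fun x hx => le_min (h.left_mem x hx).1 (h.right_mem x hx).1
  have hdeg := h.mul_add_sum_min_le
  have hdθ : d * θ₀ < d * θ := by gcongr
  exact lt_of_mul_lt_mul_left (a := d) (by linarith) hd.le

variable [DecidableEq V]

theorem sum_add_sum_add_inner (h : IsDegreeProfile X a b d n M m) (hX₂ : X₂ ⊆ X) :
    ∑ x ∈ X \ X₂, (a x + b x) + ∑ x ∈ X₂, (a x + b x) + M = m := by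
  rw [sum_sdiff hX₂, h.sum_add_inner]

theorem exists_le_biasedCut_of_abs_signedSum_le (h : IsDegreeProfile X a b d n M m)
    {X₁ : Finset V} (hX₁ : X₁ ⊆ X) (hθ : |signedSum (fun x => a x - b x) X X₁| ≤ θ) :
    ∃ X₂ ⊆ X, ∃ p ∈ Set.Icc (0 : ℝ) 1, (m - θ) / 4 ≤ biasedCut a b M (X \ X₂) X₂ p ∧
      (m - θ) / 4 ≤ biasedCut b a M (X \ X₂) X₂ p := by
  have hm := h.sum_add_sum_add_inner (sdiff_subset : X \ X₁ ⊆ X)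
  refine ⟨X \ X₁, sdiff_subset, 1 / 2, by norm_num, ?_⟩
  rw [Finset.sdiff_sdiff_eq_self hX₁] at hm ⊢
  exact le_biasedCut_half hm hθ

theorem half_sub_signedSum_le_sum_right (h : IsDegreeProfile X a b d n M m) {U : Finset V}
    (hL : L ⊆ H) (hLU : L ⊆ U) (hU : U ⊆ X) (hab : ∀ x ∈ L, a x ≤ b x) :
    (∑ x ∈ H, |a x - b x| - signedSum (fun x => |a x - b x|) H (H \ L)) / 2 ≤
      ∑ x ∈ U, b x := by
  have hle : ∑ x ∈ L, |a x - b x| ≤ ∑ x ∈ U, b x := calc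
    ∑ x ∈ L, |a x - b x| ≤ ∑ x ∈ L, b x := sum_le_sum fun x hx => by
      rw [abs_of_nonpos (sub_nonpos.2 (hab x hx))]
      linarith [(h.left_mem x (hU (hLU hx))).1]
    _ ≤ ∑ x ∈ U, b x :=
      sum_le_sum_of_subset_of_nonneg hLU fun x hx _ => (h.right_mem x (hU hx)).1
  rw [signedSum_sdiff hL, signedSum_eq_two_mul_sub hL]
  linarith

theorem sum_right_le_half_add_signedSum (hX₂ : X₂ ⊆ H \ L)
    (hab : ∀ x ∈ X₂, a x ≤ b x) :
    ∑ x ∈ X₂, b x ≤ (∑ x ∈ H, |a x - b x| + signedSum (fun x => |a x - b x|) H (H \ L)) / 2 +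
      ∑ x ∈ X₂, a x := by
  have hle : ∑ x ∈ X₂, b x - ∑ x ∈ X₂, a x ≤ ∑ x ∈ H \ L, |a x - b x| := calc
    ∑ x ∈ X₂, b x - ∑ x ∈ X₂, a x = ∑ x ∈ X₂, |a x - b x| := by
      rw [← sum_sub_distrib]
      exact sum_congr rfl fun x hx => by rw [abs_of_nonpos (sub_nonpos.2 (hab x hx)), neg_sub]
    _ ≤ ∑ x ∈ H \ L, |a x - b x| :=
      sum_le_sum_of_subset_of_nonneg hX₂ fun x _ _ => abs_nonneg _
  rw [signedSum_eq_two_mul_sub (sdiff_subset : H \ L ⊆ H)]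
  linarith

theorem exists_le_biasedCut_of_signedSum_mem_Icc {θ₀ τ : ℝ} (h : IsDegreeProfile X a b d n M m)
    (hd : 4 ≤ d) (hθ₀ : 0 ≤ θ₀) (hm : m = (2 * d - 1) * θ₀) (hθτ : θ₀ < τ) (hτn : τ ≤ n)
    (hH : H ⊆ X) (hL : L ⊆ {x ∈ H | a x - b x ≤ 0})
    (hg : signedSum (fun x => |a x - b x|) H (H \ L) ∈
      Set.Icc (θ₀ + ∑ x ∈ X \ H, |a x - b x|) (2 * τ - (θ₀ + ∑ x ∈ X \ H, |a x - b x|)))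
    (hT : (d + 1) * τ ≤ ∑ x ∈ H, |a x - b x| ∨ d * τ ≤ ∑ x ∈ H, |a x - b x| ∧
      ∑ x ∈ {x ∈ H | a x - b x ≤ 0} \ L, a x ≤ (d + 1) / 2 * (n - τ)) :
    ∃ X₂ ⊆ X, ∃ p ∈ Set.Icc (0 : ℝ) 1, (m - θ₀) / 4 ≤ biasedCut a b M (X \ X₂) X₂ p ∧
      (m - θ₀) / 4 ≤ biasedCut b a M (X \ X₂) X₂ p := by
  have hgap := signedSum_sdiff_filter_nonpos (σ := fun x => a x - b x) hH hL
  have hNH : {x ∈ H | a x - b x ≤ 0} ⊆ H := filter_subset _ _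
  have hNab : ∀ x ∈ {x ∈ H | a x - b x ≤ 0}, a x ≤ b x := fun x hx =>
    sub_nonpos.1 (mem_filter.1 hx).2
  generalize {x ∈ H | a x - b x ≤ 0} = N at *
  have hLH : L ⊆ H := hL.trans hNH
  have hLX : L ⊆ X \ (N \ L) := subset_sdiff.2 ⟨hLH.trans hH, disjoint_sdiff⟩
  have hX₂H : N \ L ⊆ H \ L := sdiff_subset_sdiff hNH Subset.rfl
  have hX₂ : N \ L ⊆ X := (hX₂H.trans sdiff_subset).trans hH
  have hX₂ab : ∀ x ∈ N \ L, a x ≤ b x := fun x hx => hNab x (sdiff_subset hx)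
  have hrest := abs_le.1 (abs_sum_le_sum_abs (fun x => a x - b x) (X \ H))
  have hHX : ∑ x ∈ H, |a x - b x| ≤ ∑ x ∈ X, |a x - b x| :=
    sum_le_sum_of_subset_of_nonneg hH fun x _ _ => abs_nonneg _
  have hγ := h.sum_le_sum_min hX₂ hX₂ab
  have htotal := h.sum_abs_add_two_mul_sum_min
  have hdeg := h.mul_add_sum_min_le
  obtain ⟨q, hq, hgq, hloss⟩ := exists_bias hd hθ₀ hθτ h.inner_nonneg (h.sum_left_nonneg hX₂)
    (by linarith) (g := signedSum (fun x => a x - b x) X (X \ (N \ L)))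
    ⟨by linarith [hg.1], by linarith [hg.2]⟩
    (g' := signedSum (fun x => |a x - b x|) H (H \ L)) (by linarith [hg.2]) hτn (by linarith) hT
  refine ⟨N \ L, hX₂, 1 / 2 - q, ⟨by linarith [hq.2], by linarith [hq.1]⟩, ?_⟩
  rw [signedSum, Finset.sdiff_sdiff_eq_self hX₂] at hgq
  exact le_biasedCut_half_sub hq.1 (h.sum_add_sum_add_inner hX₂) hgq hloss
    (h.sum_left_nonneg sdiff_subset)
    (h.half_sub_signedSum_le_sum_right hLH hLX sdiff_subset fun x hx => hNab x (hL hx))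
    (sum_right_le_half_add_signedSum hX₂H hX₂ab)

theorem exists_le_biasedCut_of_majority {d : ℕ} {θ₀ : ℝ} {j : ℕ}
    (h : IsDegreeProfile X a b d n M m) (hd : 4 ≤ d) (hθ₀ : 0 ≤ θ₀) (hm : m = (2 * d - 1) * θ₀)
    (hH : H ⊆ X) (hlt : ∀ x ∈ H, θ₀ < |a x - b x|) (hcard : #H = 2 * j + 1) (hdH : d ≤ #H)
    (hmaj : ∀ U ⊆ H, #U = j + 1 →
      θ₀ + ∑ x ∈ X \ H, |a x - b x| ≤ signedSum (fun x => |a x - b x|) H U)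
    (hN : j + 1 ≤ #{x ∈ H | a x - b x ≤ 0}) :
    ∃ X₂ ⊆ X, ∃ p ∈ Set.Icc (0 : ℝ) 1, (m - θ₀) / 4 ≤ biasedCut a b M (X \ X₂) X₂ p ∧
      (m - θ₀) / 4 ≤ biasedCut b a M (X \ X₂) X₂ p := by
  obtain ⟨x₀, hx₀, hmin⟩ := exists_min_image H (fun x => |a x - b x|) (card_pos.1 (by omega))
  have hNH : {x ∈ H | a x - b x ≤ 0} ⊆ H := filter_subset _ _
  obtain ⟨L, hLN, hLcard, hg⟩ := exists_subset_signedSum_sdiff_mem_Icc hcard hmaj hx₀ hNH hN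
  have hτn := h.abs_sub_le (hH hx₀)
  have hT : #H * |a x₀ - b x₀| ≤ ∑ x ∈ H, |a x - b x| := by
    rw [← nsmul_eq_mul]; exact card_nsmul_le_sum _ _ _ hmin
  refine h.exists_le_biasedCut_of_signedSum_mem_Icc (by exact_mod_cast hd) hθ₀ hm (hlt x₀ hx₀) hτn
    hH hLN hg ?_
  rcases hdH.eq_or_lt with rfl | hdH
  · refine Or.inr ⟨hT, (h.sum_le_card_mul_sub ((sdiff_subset.trans hNH).trans hH)
      (fun x hx => sub_nonpos.1 (mem_filter.1 (sdiff_subset hx)).2)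
      fun x hx => hmin x (hNH (sdiff_subset hx))).trans ?_⟩
    have hX₂card : 2 * #({x ∈ H | a x - b x ≤ 0} \ L) ≤ #H + 1 := by
      rw [card_sdiff_of_subset hLN]; have := card_le_card hNH; omega
    have hX₂card' : 2 * (#({x ∈ H | a x - b x ≤ 0} \ L) : ℝ) ≤ #H + 1 := by exact_mod_cast hX₂card
    exact mul_le_mul_of_nonneg_right (by linarith) (sub_nonneg.2 hτn)
  · have hdH' : (d : ℝ) + 1 ≤ #H := by exact_mod_cast hdH
    exact Or.inl ((mul_le_mul_of_nonneg_right hdH' (abs_nonneg _)).trans hT)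

theorem exists_le_biasedCut {d : ℕ} {θ₀ : ℝ} (h : IsDegreeProfile X a b d n M m) (hd : 4 ≤ d)
    (hθ₀ : 0 ≤ θ₀) (hm : m = (2 * d - 1) * θ₀) (hθ : θ₀ < θ)
    (hgap : ∀ U ⊆ X, θ ≤ |signedSum (fun x => a x - b x) X U|)
    (hcard : d ≤ #{x ∈ X | θ ≤ |a x - b x|}) :
    ∃ X₂ ⊆ X, ∃ p ∈ Set.Icc (0 : ℝ) 1, (m - θ₀) / 4 ≤ biasedCut a b M (X \ X₂) X₂ p ∧
      (m - θ₀) / 4 ≤ biasedCut b a M (X \ X₂) X₂ p := by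
  have hθpos : 0 < θ := hθ₀.trans_lt hθ
  have hH : {x ∈ X | θ ≤ |a x - b x|} ⊆ X := filter_subset _ _
  have hge : ∀ x ∈ {x ∈ X | θ ≤ |a x - b x|}, θ ≤ |a x - b x| := fun x hx => (mem_filter.1 hx).2
  have hsmall : ∀ x ∈ X \ {x ∈ X | θ ≤ |a x - b x|}, |a x - b x| < θ := fun x hx =>
    not_le.1 fun hle =>
      (mem_sdiff.1 hx).2 (mem_filter.2 ⟨(mem_sdiff.1 hx).1, hle⟩)
  generalize {x ∈ X | θ ≤ |a x - b x|} = H at *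
  have hlt : ∀ x ∈ H, |a x - b x| < 2 * θ := fun x hx =>
    (h.abs_sub_le (hH hx)).trans_lt (h.lt_two_mul (by positivity) hθ₀ hm hθ)
  obtain ⟨j, hj, hmaj⟩ := exists_card_eq_two_mul_add_one hθpos hH (fun x _ => abs_nonneg _) hsmall
    hge hlt (le_abs_signedSum_abs hgap)
  replace hge : ∀ x ∈ H, θ₀ < |a x - b x| := fun x hx => hθ.trans_le (hge x hx)
  replace hmaj : ∀ U ⊆ H, #U = j + 1 →
      θ₀ + ∑ x ∈ X \ H, |a x - b x| ≤ signedSum (fun x => |a x - b x|) H U := fun U hU hUcard =>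
    (by gcongr : θ₀ + ∑ x ∈ X \ H, |a x - b x| ≤ θ + ∑ x ∈ X \ H, |a x - b x|).trans
      (hmaj U hU hUcard)
  rcases le_or_gt (j + 1) #{x ∈ H | a x - b x ≤ 0} with hN | hN
  · exact h.exists_le_biasedCut_of_majority hd hθ₀ hm hH hge hj hcard hmaj hN
  · have hN' : j + 1 ≤ #{x ∈ H | b x - a x ≤ 0} := by
      have hcover : H ⊆ {x ∈ H | a x - b x ≤ 0} ∪ {x ∈ H | b x - a x ≤ 0} := fun x hx => by
        simpa [hx] using le_total (a x) (b x)
      have := (card_le_card hcover).trans (card_union_le _ _)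
      omega
    simp only [abs_sub_comm (a _)] at hge hmaj
    obtain ⟨X₂, hX₂, p, hp, h₁, h₂⟩ :=
      h.symm.exists_le_biasedCut_of_majority hd hθ₀ hm hH hge hj hcard hmaj hN'
    exact ⟨X₂, hX₂, p, hp, h₂, h₁⟩

theorem exists_mul_le_biasedCut {d : ℕ} (h : IsDegreeProfile X a b d n M m) (hd : 4 ≤ d)
    (hle : ∃ U ⊆ X, |signedSum (fun x => a x - b x) X U| ≤ θ)
    (hge : ∀ U ⊆ X, θ ≤ |signedSum (fun x => a x - b x) X U|)
    (hcard : d ≤ #{x ∈ X | θ ≤ |a x - b x|}) :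
    ∃ X₂ ⊆ X, ∃ p ∈ Set.Icc (0 : ℝ) 1,
      ((d : ℝ) - 1) / (2 * (2 * d - 1)) * m ≤ biasedCut a b M (X \ X₂) X₂ p ∧
      ((d : ℝ) - 1) / (2 * (2 * d - 1)) * m ≤ biasedCut b a M (X \ X₂) X₂ p := by
  have hd' : (4 : ℝ) ≤ d := by exact_mod_cast hd
  have hpos : 0 < 2 * (d : ℝ) - 1 := by linarith
  have hm : m = (2 * d - 1) * (m / (2 * d - 1)) := (mul_div_cancel₀ m hpos.ne').symm
  have htarget : ((d : ℝ) - 1) / (2 * (2 * d - 1)) * m = (m - m / (2 * d - 1)) / 4 := by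
    rw [← div_div]
    linear_combination (-1 / 4) * hm
  rw [htarget]
  rcases le_or_gt θ (m / (2 * d - 1)) with hθ | hθ
  · obtain ⟨U, hU, hUθ⟩ := hle
    exact h.exists_le_biasedCut_of_abs_signedSum_le hU (hUθ.trans hθ)
  · exact h.exists_le_biasedCut hd (div_nonneg h.total_nonneg hpos.le) hm hθ hge hcard

end IsDegreeProfile

end DegreeProfile

section Rounding

variable {V : Type*} [DecidableEq V]

theorem exists_add_sq_le {p α₁ β₁ α₂ β₂ : ℝ} (hp : p ∈ Set.Icc (0 : ℝ) 1) :
    ∃ t ∈ ({0, 1} : Set ℝ), (β₁ + (t - p) * α₁) ^ 2 + (β₂ + (t - p) * α₂) ^ 2 ≤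
      β₁ ^ 2 + β₂ ^ 2 + (α₁ ^ 2 + α₂ ^ 2) / 4 := by
  have hvar : p * (1 - p) * (α₁ ^ 2 + α₂ ^ 2) ≤ 1 / 4 * (α₁ ^ 2 + α₂ ^ 2) := by
    gcongr; linarith [sq_nonneg (p - 1 / 2)]
  have hmin := Convex.min_le_combo ((β₁ + (0 - p) * α₁) ^ 2 + (β₂ + (0 - p) * α₂) ^ 2)
    ((β₁ + (1 - p) * α₁) ^ 2 + (β₂ + (1 - p) * α₂) ^ 2) (sub_nonneg.2 hp.2) hp.1
    (sub_add_cancel 1 p)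
  rw [min_le_iff, smul_eq_mul, smul_eq_mul] at hmin
  rcases hmin with h | h
  · exact ⟨0, by simp, h.trans (by linarith)⟩
  · exact ⟨1, by simp, h.trans (by linarith)⟩

theorem update_mem_Icc {z : V → ℝ} {t : ℝ} (hz : z ∈ Set.Icc 0 1)
    (ht : t ∈ Set.Icc (0 : ℝ) 1) (y : V) : Function.update z y t ∈ Set.Icc 0 1 :=
  ⟨le_update_iff.2 ⟨ht.1, fun v _ => hz.1 v⟩, update_le_iff.2 ⟨ht.2, fun v _ => hz.2 v⟩⟩

theorem one_sub_update (z : V → ℝ) (y : V) (t : ℝ) :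
    1 - Function.update z y t = Function.update (1 - z) y (1 - t) := by
  ext v
  rcases eq_or_ne v y with rfl | hv <;> simp [*]

theorem exists_eq_zero_or_one_le {Φ : (V → ℝ) → ℝ} {C : V → ℝ}
    (hΦ : ∀ z ∈ Set.Icc (0 : V → ℝ) 1, ∀ y, ∃ t ∈ ({0, 1} : Set ℝ),
      Φ (Function.update z y t) ≤ Φ z + C y) (W : Finset V) {z : V → ℝ} (hz : z ∈ Set.Icc 0 1) :
    ∃ z' : V → ℝ, (∀ v ∈ W, z' v ∈ ({0, 1} : Set ℝ)) ∧ (∀ v ∉ W, z' v = z v) ∧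
      Φ z' ≤ Φ z + ∑ v ∈ W, C v := by
  induction W using Finset.induction_on generalizing z with
  | empty => exact ⟨z, by simp, by simp, by simp⟩
  | insert y W hy ih =>
    obtain ⟨t, ht, hle⟩ := hΦ z hz y
    have htI : t ∈ Set.Icc (0 : ℝ) 1 := by rcases ht with rfl | rfl <;> simp
    obtain ⟨z', hW, hne, hz'⟩ := ih (update_mem_Icc hz htI y)
    refine ⟨z', forall_mem_insert _ _ _ |>.2 ⟨?_, hW⟩, fun v hv => ?_, ?_⟩
    · rwa [hne y hy, Function.update_self]
    · rw [mem_insert, not_or] at hv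
      rw [hne v hv.2, Function.update_of_ne hv.1]
    · rw [sum_insert hy]; linarith

end Rounding

section Digraph

variable {V : Type} [Fintype V] {A : V → V → Prop} [DecidableRel A]

theorem sVal_eq_abs (x : V) : sVal A x = |(outDeg A x : ℤ) - inDeg A x| := by
  rw [sVal, abs_eq_max_neg, neg_sub]

variable [DecidableEq V]
  {X Y S T : Finset V} {z : V → ℝ} {ε : ℝ}

variable (A) in
/-- The number of arcs `dArcs` extended from pairs of vertex sets to pairs of weight functions:
the arc `(u, v)` contributes `f u * g v` to `arcForm A f g`. -/
noncomputable def arcForm : LinearMap.BilinForm ℝ (V → ℝ) :=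
  Matrix.toBilin' (Matrix.of fun u v => if A u v then 1 else 0)

theorem arcForm_apply (f g : V → ℝ) :
    arcForm A f g = ∑ u, ∑ v, if A u v then f u * g v else 0 := by
  simp [arcForm, Matrix.toBilin'_apply]

theorem arcForm_indicator (S T : Finset V) :
    arcForm A (Set.indicator S 1) (Set.indicator T 1) = dArcs A S T := by
  simp only [arcForm_apply, dArcs, card_filter, sum_product, Nat.cast_sum, Nat.cast_ite,
    Nat.cast_one, Nat.cast_zero]
  rw [← sum_subset (subset_univ S) fun u _ hu => by simp [hu]]
  refine sum_congr rfl fun u hu => ?_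
  rw [← sum_subset (subset_univ T) fun v _ hv => by simp [hv]]
  exact sum_congr rfl fun v hv => by simp [hu, hv]

theorem arcForm_single_left_mem_Icc (hz : z ∈ Set.Icc 0 1) (y : V) :
    arcForm A (Pi.single y 1) z ∈ Set.Icc (0 : ℝ) (outDeg A y) := by
  have h : arcForm A (Pi.single y 1) z = ∑ v with A y v, z v := by
    rw [arcForm, Matrix.toBilin'_apply', single_one_dotProduct, Matrix.mulVec, dotProduct]
    simp [sum_filter]
  rw [h, outDeg, ← nsmul_one]
  exact ⟨sum_nonneg fun v _ => hz.1 v, sum_le_card_nsmul _ _ _ fun v _ => hz.2 v⟩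

theorem arcForm_single_right_mem_Icc (hz : z ∈ Set.Icc 0 1) (y : V) :
    arcForm A z (Pi.single y 1) ∈ Set.Icc (0 : ℝ) (inDeg A y) := by
  have h : arcForm A z (Pi.single y 1) = ∑ u with A u y, z u := by
    simp [arcForm, Matrix.toBilin'_apply', dotProduct, sum_filter]
  rw [h, inDeg, ← nsmul_one]
  exact ⟨sum_nonneg fun v _ => hz.1 v, sum_le_card_nsmul _ _ _ fun v _ => hz.2 v⟩

variable (A) in
/-- The number of arcs from the first to the second side of the fractional partition that assigns
the share `z v` of each vertex `v` to the first side and the share `1 - z v` to the second one. -/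
noncomputable def fracCut (z : V → ℝ) : ℝ :=
  arcForm A z (1 - z)

theorem fracCut_indicator (S : Finset V) : fracCut A (Set.indicator S 1) = dArcs A S Sᶜ := by
  rw [fracCut, ← Set.indicator_compl, ← coe_compl, arcForm_indicator]

theorem fracCut_one_sub_indicator (S : Finset V) :
    fracCut A (1 - Set.indicator S 1) = dArcs A Sᶜ S := by
  rw [fracCut, sub_sub_cancel, ← Set.indicator_compl, ← coe_compl, arcForm_indicator]

theorem exists_fracCut_update_eq (hirr : ∀ v, ¬ A v v) (hz : z ∈ Set.Icc 0 1) (y : V) :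
    ∃ α : ℝ, |α| ≤ deg A y ∧
      ∀ t, fracCut A (Function.update z y t) = fracCut A z + (t - z y) * α := by
  have hz' : 1 - z ∈ Set.Icc (0 : V → ℝ) 1 := ⟨sub_nonneg.2 hz.2, sub_le_self _ hz.1⟩
  have hout := arcForm_single_left_mem_Icc (A := A) hz' y
  have hin := arcForm_single_right_mem_Icc (A := A) hz y
  refine ⟨arcForm A (Pi.single y 1) (1 - z) - arcForm A z (Pi.single y 1), ?_, fun t => ?_⟩
  · rw [deg, Nat.cast_add, abs_le]
    constructor <;> linarith [hout.1, hout.2, hin.1, hin.2]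
  · have hupd : Function.update z y t = z + (t - z y) • Pi.single y 1 := by
      ext v
      rcases eq_or_ne v y with rfl | hv <;> simp [*]
    have hloop : arcForm A (Pi.single y 1) (Pi.single y 1) = 0 := by
      simp [arcForm, Matrix.toBilin'_single, hirr]
    simp only [fracCut, hupd, ← sub_sub, map_add, map_sub, map_smul, LinearMap.add_apply,
      LinearMap.smul_apply, smul_eq_mul, hloop]
    ring

theorem exists_fracCut_update_sq_le (hirr : ∀ v, ¬ A v v) (c₁ c₂ : ℝ) (hz : z ∈ Set.Icc 0 1)
    (y : V) : ∃ t ∈ ({0, 1} : Set ℝ),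
      (fracCut A (Function.update z y t) - c₁) ^ 2 +
          (fracCut A (1 - Function.update z y t) - c₂) ^ 2 ≤
        (fracCut A z - c₁) ^ 2 + (fracCut A (1 - z) - c₂) ^ 2 + (deg A y : ℝ) ^ 2 / 2 := by
  obtain ⟨α₁, hα₁, h₁⟩ := exists_fracCut_update_eq hirr hz y
  obtain ⟨α₂, hα₂, h₂⟩ := exists_fracCut_update_eq hirr
    (⟨sub_nonneg.2 hz.2, sub_le_self _ hz.1⟩ : 1 - z ∈ Set.Icc (0 : V → ℝ) 1) y
  obtain ⟨t, ht, hle⟩ := exists_add_sq_le (α₁ := α₁) (β₁ := fracCut A z - c₁) (α₂ := -α₂)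
    (β₂ := fracCut A (1 - z) - c₂) ⟨hz.1 y, hz.2 y⟩
  have hsq₁ := sq_le_sq.2 (hα₁.trans (le_abs_self _))
  have hsq₂ := sq_le_sq.2 (hα₂.trans (le_abs_self _))
  refine ⟨t, ht, ?_⟩
  rw [one_sub_update, h₁, h₂, Pi.sub_apply, Pi.one_apply]
  ring_nf at hle ⊢
  linarith

theorem exists_dArcs_sub_fracCut_sq_le (hirr : ∀ v, ¬ A v v) (hz : z ∈ Set.Icc 0 1)
    (hzY : ∀ v ∉ Y, z v ∈ ({0, 1} : Set ℝ)) :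
    ∃ S : Finset V, ((dArcs A S Sᶜ : ℝ) - fracCut A z) ^ 2 +
      ((dArcs A Sᶜ S : ℝ) - fracCut A (1 - z)) ^ 2 ≤ ∑ v ∈ Y, (deg A v : ℝ) ^ 2 / 2 := by
  obtain ⟨z', hY, hne, hle⟩ := exists_eq_zero_or_one_le
    (Φ := fun w => (fracCut A w - fracCut A z) ^ 2 + (fracCut A (1 - w) - fracCut A (1 - z)) ^ 2)
    (C := fun v => (deg A v : ℝ) ^ 2 / 2)
    (fun w hw => exists_fracCut_update_sq_le hirr (fracCut A z) (fracCut A (1 - z)) hw) Y hz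
  have hz' : z' = Set.indicator ({v | z' v = 1} : Finset V) 1 := by
    ext v
    have hv : z' v ∈ ({0, 1} : Set ℝ) := by
      by_cases hvY : v ∈ Y
      exacts [hY v hvY, hne v hvY ▸ hzY v hvY]
    rcases hv with hv | hv <;> simp [Set.mem_singleton_iff.1 hv]
  refine ⟨({v | z' v = 1} : Finset V), ?_⟩
  rw [hz', fracCut_indicator, fracCut_one_sub_indicator] at hle
  simpa using hle

theorem not_adj_of_dArcs_eq_zero (h : dArcs A S T = 0) {u v : V} (hu : u ∈ S) (hv : v ∈ T) :
    ¬ A u v :=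
  filter_eq_empty_iff.1 (card_eq_zero.1 h) (mk_mem_product hu hv)

theorem dArcs_eq_sum_outDeg (h : ∀ u ∈ S, ∀ v, A u v → v ∈ T) :
    dArcs A S T = ∑ u ∈ S, outDeg A u := by
  simp only [dArcs, outDeg, card_filter, sum_product]
  refine sum_congr rfl fun u hu => sum_subset (subset_univ T) fun v _ hv => if_neg ?_
  exact fun huv => hv (h u hu v huv)

theorem dArcs_eq_sum_inDeg (h : ∀ v ∈ T, ∀ u, A u v → u ∈ S) :
    dArcs A S T = ∑ v ∈ T, inDeg A v := by
  simp only [dArcs, inDeg, card_filter, sum_product_right]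
  refine sum_congr rfl fun v hv => sum_subset (subset_univ S) fun u _ hu => if_neg ?_
  exact fun huv => hu (h v hv u huv)

theorem dArcs_univ_univ (X : Finset V) : dArcs A univ univ =
    dArcs A X X + dArcs A X Xᶜ + (dArcs A Xᶜ X + dArcs A Xᶜ Xᶜ) := by
  simp only [dArcs, card_filter, sum_product, ← sum_add_sum_compl X, sum_add_distrib]

theorem sum_deg_le (Y : Finset V) : ∑ v ∈ Y, deg A v ≤ 2 * dArcs A univ univ := calc
  ∑ v ∈ Y, deg A v ≤ ∑ v, deg A v := sum_le_sum_of_subset (subset_univ Y)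
  _ = ∑ v, outDeg A v + ∑ v, inDeg A v := sum_add_distrib
  _ = 2 * dArcs A univ univ := by
    rw [two_mul]
    nth_rw 1 [dArcs_eq_sum_outDeg fun _ _ v _ => mem_univ v]
    rw [dArcs_eq_sum_inDeg fun _ _ u _ => mem_univ u]

theorem sum_sq_deg_le {C : ℝ} (hdeg : ∀ y ∈ Y, (deg A y : ℝ) ≤ C) (hC : 0 ≤ C) :
    ∑ y ∈ Y, (deg A y : ℝ) ^ 2 ≤ 2 * C * dArcs A univ univ := calc
  ∑ y ∈ Y, (deg A y : ℝ) ^ 2 ≤ ∑ y ∈ Y, C * (deg A y : ℝ) := sum_le_sum fun y hy => by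
    rw [sq]; exact mul_le_mul_of_nonneg_right (hdeg y hy) (Nat.cast_nonneg _)
  _ = C * (∑ y ∈ Y, deg A y : ℕ) := by rw [← mul_sum, Nat.cast_sum]
  _ ≤ C * (2 * dArcs A univ univ : ℕ) := by gcongr; exact sum_deg_le Y
  _ = 2 * C * dArcs A univ univ := by push_cast; ring

theorem exists_fracCut_sub_le_dArcs (hirr : ∀ v, ¬ A v v) (hε : 0 ≤ ε)
    (hdeg : ∀ y ∈ Y, (deg A y : ℝ) ≤ ε ^ 2 * dArcs A univ univ / 4) (hz : z ∈ Set.Icc 0 1)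
    (hzY : ∀ v ∉ Y, z v ∈ ({0, 1} : Set ℝ)) :
    ∃ S : Finset V, fracCut A z - ε * dArcs A univ univ ≤ dArcs A S Sᶜ ∧
      fracCut A (1 - z) - ε * dArcs A univ univ ≤ dArcs A Sᶜ S := by
  obtain ⟨S, hS⟩ := exists_dArcs_sub_fracCut_sq_le hirr hz hzY
  have hvar : ∑ v ∈ Y, (deg A v : ℝ) ^ 2 / 2 ≤ (ε * dArcs A univ univ) ^ 2 := by
    have := sum_sq_deg_le hdeg (by positivity)
    rw [← sum_div]
    linarith [sq_nonneg (ε * dArcs A univ univ)]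
  have hεm : 0 ≤ ε * (dArcs A univ univ : ℝ) := by positivity
  have h₁ := abs_le_of_sq_le_sq' ((le_add_of_nonneg_right (sq_nonneg _)).trans (hS.trans hvar)) hεm
  have h₂ := abs_le_of_sq_le_sq' ((le_add_of_nonneg_left (sq_nonneg _)).trans (hS.trans hvar)) hεm
  exact ⟨S, by linarith [h₁.1], by linarith [h₂.1]⟩

section BiasedShare

variable {U : Finset V} {p : ℝ}

/-- The fractional partition that places `U` on the first side and `X \ U` on the second one, and
assigns the share `p` of each vertex outside `X` to the first side. -/
noncomputable def biasedShare (X U : Finset V) (p : ℝ) : V → ℝ :=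
  Set.indicator U 1 + p • Set.indicator ((Xᶜ : Finset V) : Set V) 1

theorem biasedShare_apply_of_mem {v : V} (hv : v ∈ X) :
    biasedShare X U p v = if v ∈ U then 1 else 0 := by
  simp [biasedShare, hv, Set.indicator_apply]

theorem biasedShare_apply_of_notMem {v : V} (hU : U ⊆ X) (hv : v ∉ X) :
    biasedShare X U p v = p := by
  simp [biasedShare, hv, notMem_mono hU hv]

theorem biasedShare_mem_Icc (hU : U ⊆ X) (hp : p ∈ Set.Icc (0 : ℝ) 1) :
    biasedShare X U p ∈ Set.Icc 0 1 := by
  refine Set.mem_Icc.2 ⟨fun v => ?_, fun v => ?_⟩ <;> by_cases hv : v ∈ X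
  · rw [biasedShare_apply_of_mem hv]; split_ifs <;> simp
  · exact (biasedShare_apply_of_notMem hU hv).symm ▸ hp.1
  · rw [biasedShare_apply_of_mem hv]; split_ifs <;> simp
  · exact (biasedShare_apply_of_notMem hU hv).symm ▸ hp.2

theorem one_sub_biasedShare (hU : U ⊆ X) :
    1 - biasedShare X U p = biasedShare X (X \ U) (1 - p) := by
  ext v
  rw [Pi.sub_apply, Pi.one_apply]
  by_cases hv : v ∈ X
  · by_cases hvU : v ∈ U <;> simp [biasedShare_apply_of_mem, hv, hvU]
  · rw [biasedShare_apply_of_notMem hU hv, biasedShare_apply_of_notMem sdiff_subset hv]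

theorem dArcs_compl_right_eq_sum_outDeg (heX : dArcs A X X = 0) (hU : U ⊆ X) :
    dArcs A U Xᶜ = ∑ u ∈ U, outDeg A u :=
  dArcs_eq_sum_outDeg fun _ hu _ huv =>
    mem_compl.2 fun hv => not_adj_of_dArcs_eq_zero heX (hU hu) hv huv

theorem dArcs_compl_left_eq_sum_inDeg (heX : dArcs A X X = 0) (hU : U ⊆ X) :
    dArcs A Xᶜ U = ∑ v ∈ U, inDeg A v :=
  dArcs_eq_sum_inDeg fun _ hv _ huv =>
    mem_compl.2 fun hu => not_adj_of_dArcs_eq_zero heX hu (hU hv) huv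

theorem biasedCut_le_fracCut (heX : dArcs A X X = 0) (hU : U ⊆ X) (p : ℝ) :
    biasedCut (fun x => (outDeg A x : ℝ)) (fun x => (inDeg A x : ℝ)) (dArcs A Xᶜ Xᶜ) U (X \ U) p ≤
      fracCut A (biasedShare X U p) := by
  rw [fracCut, one_sub_biasedShare hU]
  simp only [biasedShare, map_add, map_smul, LinearMap.add_apply, LinearMap.smul_apply,
    smul_eq_mul, arcForm_indicator, dArcs_compl_right_eq_sum_outDeg heX hU,
    dArcs_compl_left_eq_sum_inDeg heX (sdiff_subset : X \ U ⊆ X), biasedCut, Nat.cast_sum]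
  linarith [(Nat.cast_nonneg _ : (0 : ℝ) ≤ dArcs A U (X \ U))]

theorem exists_biasedCut_sub_le_dArcs (hirr : ∀ v, ¬ A v v) (heX : dArcs A X X = 0) (hε : 0 ≤ ε)
    (hdeg : ∀ y ∈ Xᶜ, (deg A y : ℝ) ≤ ε ^ 2 * dArcs A univ univ / 4) (hU : U ⊆ X)
    (hp : p ∈ Set.Icc (0 : ℝ) 1) :
    ∃ S : Finset V,
      biasedCut (fun x => (outDeg A x : ℝ)) (fun x => (inDeg A x : ℝ)) (dArcs A Xᶜ Xᶜ) (X \ U) U p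
        - ε * dArcs A univ univ ≤ dArcs A S Sᶜ ∧
      biasedCut (fun x => (inDeg A x : ℝ)) (fun x => (outDeg A x : ℝ)) (dArcs A Xᶜ Xᶜ) (X \ U) U p
        - ε * dArcs A univ univ ≤ dArcs A Sᶜ S := by
  have hint : ∀ v ∉ Xᶜ, biasedShare X (X \ U) p v ∈ ({0, 1} : Set ℝ) := fun v hv => by
    rw [biasedShare_apply_of_mem (notMem_compl.1 hv)]
    split_ifs <;> simp
  obtain ⟨S, h₁, h₂⟩ := exists_fracCut_sub_le_dArcs hirr hε hdeg
    (biasedShare_mem_Icc sdiff_subset hp) hint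
  have hcut₁ := biasedCut_le_fracCut heX (sdiff_subset : X \ U ⊆ X) p
  have hcut₂ := biasedCut_le_fracCut heX hU (1 - p)
  rw [one_sub_biasedShare sdiff_subset, Finset.sdiff_sdiff_eq_self hU] at h₂
  rw [Finset.sdiff_sdiff_eq_self hU] at hcut₁
  rw [← biasedCut_swap] at hcut₂
  exact ⟨S, by linarith, by linarith⟩

theorem gap_eq_signedSum (heX : dArcs A X X = 0) (hU : U ⊆ X) :
    gap A U (X \ U) Xᶜ = signedSum (fun x => (outDeg A x : ℤ) - inDeg A x) X U := by
  rw [gap, dArcs_compl_right_eq_sum_outDeg heX hU, dArcs_compl_left_eq_sum_inDeg heX hU,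
    dArcs_compl_right_eq_sum_outDeg heX sdiff_subset,
    dArcs_compl_left_eq_sum_inDeg heX sdiff_subset, signedSum]
  push_cast [sum_sub_distrib]
  ring

theorem isDegreeProfile_outDeg_inDeg {d : ℕ} (heX : dArcs A X X = 0)
    (hout : ∀ y ∈ Xᶜ, d ≤ outDeg A y) :
    IsDegreeProfile X (fun x => (outDeg A x : ℝ)) (fun x => (inDeg A x : ℝ)) d #Xᶜ
      (dArcs A Xᶜ Xᶜ) (dArcs A univ univ) where
  left_mem x hx := ⟨Nat.cast_nonneg _, Nat.cast_le.2 <| card_le_card fun _ hv =>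
    mem_compl.2 fun hvX => not_adj_of_dArcs_eq_zero heX hx hvX (mem_filter.1 hv).2⟩
  right_mem x hx := ⟨Nat.cast_nonneg _, Nat.cast_le.2 <| card_le_card fun _ hv =>
    mem_compl.2 fun hvX => not_adj_of_dArcs_eq_zero heX hvX hx (mem_filter.1 hv).2⟩
  inner_nonneg := Nat.cast_nonneg _
  sum_add_inner := by
    rw [sum_add_distrib, dArcs_univ_univ X, heX, dArcs_compl_right_eq_sum_outDeg heX Subset.rfl,
      dArcs_compl_left_eq_sum_inDeg heX Subset.rfl]
    push_cast
    ring
  mul_add_sum_min_le := by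
    rw [dArcs_eq_sum_outDeg fun _ _ v _ => mem_univ v, ← sum_compl_add_sum X, Nat.cast_add,
      Nat.cast_sum, Nat.cast_sum]
    gcongr with x
    · rw [mul_comm, ← nsmul_eq_mul]
      exact card_nsmul_le_sum _ _ _ fun y hy => Nat.cast_le.2 (hout y hy)
    · exact min_le_left _ _

end BiasedShare

end Digraph

theorem stmt12_general {V : Type} [Fintype V] [DecidableEq V] (A : V → V → Prop) [DecidableRel A]
    (hirr : ∀ v, ¬ A v v)
    (m : ℕ) (hm : m = dArcs A Finset.univ Finset.univ)
    (d : ℕ) (hd : 4 ≤ d)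
    (X Y : Finset V) (hXY : X ∪ Y = Finset.univ) (hdXY : Disjoint X Y)
    (hout : ∀ y ∈ Y, d ≤ outDeg A y) (heX : dArcs A X X = 0)
    (θ : ℤ) (hθ : IsLeast {t : ℤ | ∃ X₁ ⊆ X, t = |gap A X₁ (X \ X₁) Y|} θ)
    (X' : Finset V) (hX' : X' = X.filter fun x => θ ≤ sVal A x)
    (ε : ℝ) (hε : 0 < ε) (hdeg : ∀ y ∈ Y, (deg A y : ℝ) ≤ ε ^ 2 * m / 4)
    (hbig : d ≤ X'.card) :
    ∃ V₁ V₂ : Finset V, V₁ ∪ V₂ = Finset.univ ∧ Disjoint V₁ V₂ ∧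
        (((d : ℝ) - 1) / (2 * (2 * (d : ℝ) - 1)) - ε) * m ≤
          min (dArcs A V₁ V₂ : ℝ) (dArcs A V₂ V₁ : ℝ) := by
  obtain rfl : Xᶜ = Y := (IsCompl.of_eq (disjoint_iff.1 hdXY) hXY).compl_eq
  subst hm hX'
  have hgap : ∀ U ⊆ X, ((|gap A U (X \ U) Xᶜ| : ℤ) : ℝ) =
      |signedSum (fun x => (outDeg A x : ℝ) - inDeg A x) X U| := fun U hU => by
    rw [gap_eq_signedSum heX hU]; simp [signedSum]
  have hhuge : {x ∈ X | θ ≤ sVal A x} = {x ∈ X | (θ : ℝ) ≤ |(outDeg A x : ℝ) - inDeg A x|} :=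
    filter_congr fun x _ => by rw [sVal_eq_abs, ← Int.cast_le (R := ℝ)]; simp
  obtain ⟨⟨X₁, hX₁, hθX₁⟩, hmin⟩ := hθ
  have hprofile := isDegreeProfile_outDeg_inDeg heX hout
  obtain ⟨X₂, hX₂, p, hp, hcut⟩ := hprofile.exists_mul_le_biasedCut hd
    ⟨X₁, hX₁, by rw [← hgap X₁ hX₁, hθX₁]⟩
    (fun U hU => by rw [← hgap U hU]; exact_mod_cast hmin ⟨U, hU, rfl⟩) (hhuge ▸ hbig)
  obtain ⟨S, hS⟩ := exists_biasedCut_sub_le_dArcs hirr heX hε.le hdeg hX₂ hp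
  refine ⟨S, Sᶜ, union_compl S, disjoint_compl_right, ?_⟩
  rw [sub_mul]
  exact le_min ((sub_le_sub_right hcut.1 _).trans hS.1) ((sub_le_sub_right hcut.2 _).trans hS.2)

/-- Proposition 4.1: at least `d` huge vertices. -/
theorem stmt12 {V : Type} [Fintype V] [DecidableEq V] (A : V → V → Prop) [DecidableRel A]
    (hirr : ∀ v, ¬ A v v)
    (m : ℕ) (hm : m = dArcs A Finset.univ Finset.univ)
    (d : ℕ) (hd : 4 ≤ d) (hout : ∀ x, d ≤ outDeg A x)
    (X Y : Finset V) (hXY : X ∪ Y = Finset.univ) (hdXY : Disjoint X Y)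
    (heX : dArcs A X X = 0)
    (θ : ℤ) (hθ : IsLeast {t : ℤ | ∃ X₁ ⊆ X, t = |gap A X₁ (X \ X₁) Y|} θ)
    (X' : Finset V) (hX' : X' = X.filter fun x => θ ≤ sVal A x)
    (ε : ℝ) (hε : 0 < ε) (hdeg : ∀ y ∈ Y, (deg A y : ℝ) ≤ ε ^ 2 * m / 4)
    (hbig : d ≤ X'.card) :
    ∃ V₁ V₂ : Finset V, V₁ ∪ V₂ = Finset.univ ∧ Disjoint V₁ V₂ ∧
        (((d : ℝ) - 1) / (2 * (2 * (d : ℝ) - 1)) - ε) * m ≤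
          min (dArcs A V₁ V₂ : ℝ) (dArcs A V₂ V₁ : ℝ) :=
  stmt12_general A hirr m hm d hd X Y hXY hdXY (fun y _ => hout y) heX θ hθ X' hX' ε hε hdeg hbig
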